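/- Let α ∈ (0,1) and ρ ∈ (0,1) with ρ̂ := 1 - ρ. Then ∫₀¹ (1-y)^{αρ̂-1} (1+y)^{αρ-1} dy + ∫₀¹ (1-y)^{αρ-1} (1+y)^{αρ̂-1} dy = 2^{α-1} Γ(αρ) Γ(αρ̂) / Γ(α). -/

import Mathlib

open MeasureTheory Real Set

/-!
The substitution `y ↦ -y` turns the second integral into the part over `(-1, 0)` of the integral
whose part over `(0, 1)` is the first one. The two therefore add up to Euler's Beta integral with
parameters `αρ` and `α(1 - ρ)`, rescaled from `[0, 1]` to `[-1, 1]`; the power of `2` comes from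
the length of `[-1, 1]`.
-/

section FoldedIntegral

variable {E : Type*} [NormedAddCommGroup E] [NormedSpace ℝ E]

theorem integral_add_integral_comp_neg {f : ℝ → E} {c : ℝ}
    (hf : IntervalIntegrable f volume (-c) c) :
    (∫ x in 0..c, f x) + ∫ x in 0..c, f (-x) = ∫ x in -c..c, f x := by
  have zero_mem : (0 : ℝ) ∈ uIcc (-c) c := by
    simp [mem_uIcc, le_total]
  have hleft : IntervalIntegrable f volume (-c) 0 :=
    hf.mono_set (uIcc_subset_uIcc_left zero_mem)
  have hright : IntervalIntegrable f volume 0 c :=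
    hf.mono_set (uIcc_subset_uIcc_right zero_mem)
  rw [intervalIntegral.integral_comp_neg, neg_zero, add_comm,
    intervalIntegral.integral_add_adjacent_intervals hleft hright]

end FoldedIntegral

section EulerIntegral

variable {a b p q : ℝ}

theorem integral_rpow_mul_one_sub_rpow (ha : 0 < a) (hb : 0 < b) :
    ∫ x in (0 : ℝ)..1, x ^ (a - 1) * (1 - x) ^ (b - 1) = ProbabilityTheory.beta a b := by
  have ofReal_integrand : ∀ x ∈ uIcc (0 : ℝ) 1,
      ((x ^ (a - 1) * (1 - x) ^ (b - 1) : ℝ) : ℂ)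
        = (x : ℂ) ^ ((a : ℂ) - 1) * (1 - (x : ℂ)) ^ ((b : ℂ) - 1) := by
    intro x hx
    rw [uIcc_of_le zero_le_one] at hx
    rw [Complex.ofReal_mul, Complex.ofReal_cpow hx.1, Complex.ofReal_cpow (sub_nonneg.2 hx.2)]
    push_cast
    rfl
  rw [ProbabilityTheory.beta_eq_betaIntegralReal a b ha hb, Complex.betaIntegral,
    ← intervalIntegral.integral_congr ofReal_integrand, intervalIntegral.integral_ofReal,
    Complex.ofReal_re]

theorem integral_sub_rpow_mul_sub_rpow (ha : 0 < a) (hb : 0 < b) (hpq : p < q) :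
    ∫ y in p..q, (y - p) ^ (a - 1) * (q - y) ^ (b - 1)
      = (q - p) ^ (a + b - 1) * ProbabilityTheory.beta a b := by
  have hlen : 0 < q - p := sub_pos.2 hpq
  have rescale_integrand : ∀ x ∈ uIcc (0 : ℝ) 1,
      ((q - p) * x + p - p) ^ (a - 1) * (q - ((q - p) * x + p)) ^ (b - 1)
        = (q - p) ^ (a + b - 2) * (x ^ (a - 1) * (1 - x) ^ (b - 1)) := by
    intro x hx
    rw [uIcc_of_le zero_le_one] at hx
    rw [add_sub_cancel_right, show q - ((q - p) * x + p) = (q - p) * (1 - x) by ring,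
      mul_rpow hlen.le hx.1, mul_rpow hlen.le (sub_nonneg.2 hx.2),
      show a + b - 2 = (a - 1) + (b - 1) by ring, rpow_add hlen]
    ring
  calc ∫ y in p..q, (y - p) ^ (a - 1) * (q - y) ^ (b - 1)
      = (q - p) * ∫ x in (0 : ℝ)..1,
          ((q - p) * x + p - p) ^ (a - 1) * (q - ((q - p) * x + p)) ^ (b - 1) := by
        simpa using (intervalIntegral.smul_integral_comp_mul_add (a := 0) (b := 1)
          (fun y ↦ (y - p) ^ (a - 1) * (q - y) ^ (b - 1)) (q - p) p).symm
    _ = (q - p) * (q - p) ^ (a + b - 2) * ProbabilityTheory.beta a b := by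
        rw [intervalIntegral.integral_congr rescale_integrand, intervalIntegral.integral_const_mul,
          integral_rpow_mul_one_sub_rpow ha hb, mul_assoc]
    _ = (q - p) ^ (a + b - 1) * ProbabilityTheory.beta a b := by
        rw [mul_comm (q - p), ← rpow_add_one hlen.ne']
        ring_nf

-- A Bochner integral with a nonzero value can only come from an integrable function.
theorem intervalIntegrable_sub_rpow_mul_sub_rpow (ha : 0 < a) (hb : 0 < b) (hpq : p < q) :
    IntervalIntegrable (fun y ↦ (y - p) ^ (a - 1) * (q - y) ^ (b - 1)) volume p q := by
  have integral_pos : 0 < ∫ y in p..q, (y - p) ^ (a - 1) * (q - y) ^ (b - 1) := by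
    rw [integral_sub_rpow_mul_sub_rpow ha hb hpq]
    exact mul_pos (rpow_pos_of_pos (sub_pos.2 hpq) _) (ProbabilityTheory.beta_pos ha hb)
  exact intervalIntegral.intervalIntegrable_of_integral_ne_zero integral_pos.ne'

end EulerIntegral

theorem stmt_10_general {a b : ℝ} (ha : 0 < a) (hb : 0 < b) :
    (∫ y in Ioo (0 : ℝ) 1, (1 - y) ^ (b - 1) * (1 + y) ^ (a - 1))
      + (∫ y in Ioo (0 : ℝ) 1, (1 - y) ^ (a - 1) * (1 + y) ^ (b - 1))
      = 2 ^ (a + b - 1) * Gamma a * Gamma b / Gamma (a + b) := by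
  let f : ℝ → ℝ := fun y ↦ (y - -1) ^ (a - 1) * (1 - y) ^ (b - 1)
  have neg_one_lt_one : (-1 : ℝ) < 1 := by norm_num
  have integrand_eq (y : ℝ) : (1 - y) ^ (b - 1) * (1 + y) ^ (a - 1) = f y := by
    simp only [f, sub_neg_eq_add, add_comm y, mul_comm]
  have reflected_integrand_eq (y : ℝ) : (1 - y) ^ (a - 1) * (1 + y) ^ (b - 1) = f (-y) := by
    simp only [f, sub_neg_eq_add, neg_add_eq_sub]
  simp_rw [integrand_eq, reflected_integrand_eq, ← integral_Ioc_eq_integral_Ioo,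
    ← intervalIntegral.integral_of_le zero_le_one]
  calc (∫ y in (0 : ℝ)..1, f y) + ∫ y in (0 : ℝ)..1, f (-y)
      = ∫ y in (-1 : ℝ)..1, f y :=
        integral_add_integral_comp_neg
          (intervalIntegrable_sub_rpow_mul_sub_rpow ha hb neg_one_lt_one)
    _ = (1 - -1) ^ (a + b - 1) * ProbabilityTheory.beta a b :=
        integral_sub_rpow_mul_sub_rpow ha hb neg_one_lt_one
    _ = 2 ^ (a + b - 1) * Gamma a * Gamma b / Gamma (a + b) := by
        rw [sub_neg_eq_add, one_add_one_eq_two, ProbabilityTheory.beta, ← mul_div_assoc, mul_assoc]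

theorem stmt_10 (α ρ : ℝ) (hα : α ∈ Ioo (0:ℝ) 1) (hρ : ρ ∈ Ioo (0:ℝ) 1) :
    (∫ y in Ioo (0:ℝ) 1, (1 - y) ^ (α * (1 - ρ) - 1) * (1 + y) ^ (α * ρ - 1))
      + (∫ y in Ioo (0:ℝ) 1, (1 - y) ^ (α * ρ - 1) * (1 + y) ^ (α * (1 - ρ) - 1))
      = 2 ^ (α - 1) * Real.Gamma (α * ρ) * Real.Gamma (α * (1 - ρ)) / Real.Gamma α := by
  have sum_eq : α * ρ + α * (1 - ρ) = α := by ring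
  simpa only [sum_eq] using stmt_10_general (mul_pos hα.1 hρ.1) (mul_pos hα.1 (sub_pos.2 hρ.2))
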